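/- arXiv:2605.00198 — 2 statements merged into one kernel-verified Lean document; each statement's English description precedes it below -/
import Mathlib

section
/- Assume the CDF G of W is regularly varying at zero with index β = 1 and that ∫_0^∞ G(1/u) du = ∞. Then A(t)/B(t) → ∞ as t → ∞. -/
open MeasureTheory ProbabilityTheory Filter

open scoped ENNReal Topology

/-!
With `x = H (1 / t)` one has `G x = 1 / t` and `B t = 1 / x`, so the substitution `u = v / x` turns
`A t / B t` into `∫ v in 0..1, G (x / v) / G x`. As `t → ∞` we have `x → 0⁺`, the integrand tends to
`v ^ (-β)` with `β ≥ 1`, and Fatou's lemma bounds the limit inferior below by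
`∫ v in 0..1, v ^ (-β) = ∞`.
-/

/-- `f` is regularly varying along `l` with index `β`. Regular variation at `0` is the case
`l = 𝓝[>] 0`, and at `∞` the case `l = atTop`. -/
def IsRegularlyVarying (l : Filter ℝ) (f : ℝ → ℝ) (β : ℝ) : Prop :=
  ∀ s > (0 : ℝ), Tendsto (fun t => f (s * t) / f t) l (𝓝 (s ^ β))

lemma setLIntegral_Ioc_rpow_eq_top {p b : ℝ} (hp : p ≤ -1) (hb : 0 < b) :
    ∫⁻ v in Set.Ioc 0 b, ENNReal.ofReal (v ^ p) = ∞ := by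
  have hmeas : Measurable fun v : ℝ => v ^ p := by fun_prop
  have hnonneg : 0 ≤ᵐ[volume.restrict (Set.Ioc 0 b)] fun v => v ^ p :=
    ae_restrict_of_forall_mem measurableSet_Ioc fun v hv => Real.rpow_nonneg hv.1.le p
  by_contra hfin
  have hint : IntegrableOn (fun v : ℝ => v ^ p) (Set.Ioc 0 b) :=
    (lintegral_ofReal_ne_top_iff_integrable hmeas.aestronglyMeasurable hnonneg).1 hfin
  exact hp.not_gt ((intervalIntegral.integrableOn_Ioo_rpow_iff hb).1
    (hint.mono_set Set.Ioo_subset_Ioc_self))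

namespace IsRegularlyVarying

variable {l : Filter ℝ} {f : ℝ → ℝ} {β : ℝ}

lemma eventually_ne_zero (hf : IsRegularlyVarying l f β) : ∀ᶠ t in l, f t ≠ 0 := by
  have hratio : Tendsto (fun t => f t / f t) l (𝓝 1) := by simpa using hf 1 one_pos
  filter_upwards [hratio.eventually_ne one_ne_zero] with t ht hzero
  exact ht (by rw [hzero, div_zero])

lemma pos_of_monotone (hf : IsRegularlyVarying (𝓝[>] 0) f β) (hmono : Monotone f)
    (hzero : f 0 = 0) {u : ℝ} (hu : 0 < u) : 0 < f u := by
  obtain ⟨t, hft, ht, htu⟩ := (hf.eventually_ne_zero.and (Ioo_mem_nhdsGT hu)).exists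
  have hft_nonneg : 0 ≤ f t := hzero ▸ hmono ht.le
  exact (hft_nonneg.lt_of_ne' hft).trans_le (hmono htu.le)

lemma tendsto_setLIntegral_ratio [l.IsCountablyGenerated] (hf : IsRegularlyVarying l f β)
    (hβ : 1 ≤ β) (hmeas : Measurable f) :
    Tendsto (fun x => ∫⁻ v in Set.Ioc 0 1, ENNReal.ofReal (f (v⁻¹ * x) / f x)) l (𝓝 ∞) := by
  rcases l.eq_or_neBot with rfl | _
  · exact tendsto_bot
  have hlim : ∀ v ∈ Set.Ioc (0 : ℝ) 1,
      liminf (fun x => ENNReal.ofReal (f (v⁻¹ * x) / f x)) l = ENNReal.ofReal (v ^ (-β)) := by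
    intro v hv
    rw [Real.rpow_neg hv.1.le, ← Real.inv_rpow hv.1.le]
    exact (ENNReal.tendsto_ofReal (hf v⁻¹ (inv_pos.2 hv.1))).liminf_eq
  have htop : ∞ ≤ liminf (fun x => ∫⁻ v in Set.Ioc 0 1, ENNReal.ofReal (f (v⁻¹ * x) / f x)) l :=
    calc
      ∞ = ∫⁻ v in Set.Ioc (0 : ℝ) 1, ENNReal.ofReal (v ^ (-β)) :=
        (setLIntegral_Ioc_rpow_eq_top (neg_le_neg hβ) one_pos).symm
      _ = ∫⁻ v in Set.Ioc (0 : ℝ) 1, liminf (fun x => ENNReal.ofReal (f (v⁻¹ * x) / f x)) l :=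
        (setLIntegral_congr_fun measurableSet_Ioc hlim).symm
      _ ≤ _ := lintegral_liminf_le fun x => by fun_prop
  exact tendsto_of_le_liminf_of_limsup_le htop le_top

end IsRegularlyVarying

lemma mul_setIntegral_Ioc_comp_one_div (f : ℝ → ℝ) {x : ℝ} (hx : 0 < x) :
    x * ∫ u in Set.Ioc 0 (1 / x), f (1 / u) = ∫ v in Set.Ioc 0 1, f (v⁻¹ * x) := by
  rw [← intervalIntegral.integral_of_le (one_div_nonneg.2 hx.le),
    ← intervalIntegral.integral_of_le zero_le_one]
  simpa [div_eq_inv_mul] using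
    (intervalIntegral.integral_comp_div (fun u => f (1 / u)) hx.ne' (a := 0) (b := 1)).symm

lemma integrableOn_Ioc_comp_inv_mul {f : ℝ → ℝ} {x : ℝ} (hx : 0 < x)
    (hint : IntegrableOn (fun u => f (1 / u)) (Set.Ioc 0 (1 / x))) :
    IntegrableOn (fun v => f (v⁻¹ * x)) (Set.Ioc 0 1) := by
  rw [← intervalIntegrable_iff_integrableOn_Ioc_of_le (by positivity)] at hint ⊢
  simpa [hx.ne', mul_comm] using hint.comp_mul_left (c := x⁻¹)

lemma IsRegularlyVarying.tendsto_mul_setIntegral_div_atTop {f : ℝ → ℝ} {β : ℝ}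
    (hf : IsRegularlyVarying (𝓝[>] 0) f β) (hβ : 1 ≤ β) (hmeas : Measurable f)
    (hnonneg : ∀ u > 0, 0 ≤ f u)
    (hint : ∀ b, IntegrableOn (fun u => f (1 / u)) (Set.Ioc 0 b)) :
    Tendsto (fun x => x * (∫ u in Set.Ioc 0 (1 / x), f (1 / u)) / f x) (𝓝[>] 0) atTop := by
  rw [← ENNReal.tendsto_ofReal_nhds_top]
  refine (hf.tendsto_setLIntegral_ratio hβ hmeas).congr' ?_
  filter_upwards [self_mem_nhdsWithin] with x (hx : 0 < x)
  have hratio_nonneg : 0 ≤ᵐ[volume.restrict (Set.Ioc 0 1)] fun v => f (v⁻¹ * x) / f x :=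
    ae_restrict_of_forall_mem measurableSet_Ioc fun v hv =>
      div_nonneg (hnonneg _ (mul_pos (inv_pos.2 hv.1) hx)) (hnonneg x hx)
  rw [mul_setIntegral_Ioc_comp_one_div f hx, ← integral_div,
    ofReal_integral_eq_lintegral_ofReal
      ((integrableOn_Ioc_comp_inv_mul hx (hint (1 / x))).div_const (f x)) hratio_nonneg]

lemma tendsto_nhdsGT_zero_of_rightInverse {G H : ℝ → ℝ} (hmono : Monotone G) (hzero : G 0 = 0)
    (hpos : ∀ u > 0, 0 < G u) (hGH : ∀ᶠ v in 𝓝[>] 0, G (H v) = v) :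
    Tendsto H (𝓝[>] 0) (𝓝[>] 0) := by
  refine (nhdsGT_basis (0 : ℝ)).tendsto_right_iff.2 fun a ha => ?_
  filter_upwards [hGH, Ioo_mem_nhdsGT (hpos a ha)] with v hv ⟨hv_pos, hva⟩
  exact ⟨hmono.reflect_lt (by rwa [hv, hzero]), hmono.reflect_lt (by rwa [hv])⟩

theorem stmt6_general {G H B A : ℝ → ℝ} {β : ℝ} (hβ : 1 ≤ β)
    (hmono : Monotone G) (hzero : G 0 = 0)
    (hint : ∀ b, IntegrableOn (fun u => G (1 / u)) (Set.Ioc 0 b))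
    (hGH : ∀ᶠ v in 𝓝[>] 0, G (H v) = v)
    (hB : ∀ t, B t = 1 / H (1 / t))
    (hA : ∀ t, A t = t * ∫ u in Set.Ioc (0 : ℝ) (B t), G (1 / u))
    (hreg : IsRegularlyVarying (𝓝[>] 0) G β) :
    Tendsto (fun t => A t / B t) atTop atTop := by
  have hpos : ∀ u > 0, 0 < G u := fun u hu => hreg.pos_of_monotone hmono hzero hu
  have hinv : Tendsto (fun t : ℝ => 1 / t) atTop (𝓝[>] 0) := by
    simpa only [one_div] using tendsto_inv_atTop_nhdsGT_zero
  have hH : Tendsto (fun t => H (1 / t)) atTop (𝓝[>] 0) :=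
    (tendsto_nhdsGT_zero_of_rightInverse hmono hzero hpos hGH).comp hinv
  refine ((hreg.tendsto_mul_setIntegral_div_atTop hβ hmono.measurable
    (fun u hu => (hpos u hu).le) hint).comp hH).congr' ?_
  filter_upwards [hinv.eventually hGH] with t ht
  rw [Function.comp_apply, ht, hA, hB, div_div_eq_mul_div, div_div_eq_mul_div]
  ring

lemma eq_cdf_map {Ω : Type*} [MeasurableSpace Ω] {μ : Measure Ω} [IsProbabilityMeasure μ]
    {W : Ω → ℝ} (hW : Measurable W) {G : ℝ → ℝ} (hG : ∀ u, G u = (μ {ω | W ω ≤ u}).toReal) :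
    G = cdf (μ.map W) := by
  have := Measure.isProbabilityMeasure_map (μ := μ) hW.aemeasurable
  ext u
  rw [hG, cdf_eq_real, map_measureReal_apply hW measurableSet_Iic]
  rfl

lemma integrableOn_cdf_one_div (μ : Measure ℝ) (a b : ℝ) :
    IntegrableOn (fun u => cdf μ (1 / u)) (Set.Ioc a b) := by
  have hmeas : Measurable fun u : ℝ => cdf μ (1 / u) :=
    (monotone_cdf μ).measurable.comp (by fun_prop)
  refine Measure.integrableOn_of_bounded (M := 1) measure_Ioc_lt_top.ne
    hmeas.aestronglyMeasurable (ae_of_all _ fun u => ?_)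
  rw [Real.norm_of_nonneg (cdf_nonneg μ _)]
  exact cdf_le_one μ _

/-- Let `W` be a random variable with values in `(0,∞)` with continuous
positive Lebesgue density `gW` on `(0,∞)`, CDF `G` (strictly increasing on `[0,∞)` with range
`[0,1)`), inverse `H`, `B t = 1/H(1/t)` and `A t = t * ∫_0^{B t} G(1/u) du`.  Assume `G` is
regularly varying at `0` with index `β = 1` and that `∫_0^∞ G(1/u) du = ∞`.  Then
`A t / B t → ∞` as `t → ∞`. -/
theorem stmt6
    {Ω : Type*} [MeasureSpace Ω] [IsProbabilityMeasure (ℙ : Measure Ω)]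
    (W : Ω → ℝ) (hWmeas : Measurable W)
    (gW : ℝ → ℝ)
    (hgW_pos : ∀ w ∈ Set.Ioi (0 : ℝ), 0 < gW w)
    (hgW_cont : ContinuousOn gW (Set.Ioi 0))
    (hgW_supp : ∀ w ≤ (0 : ℝ), gW w = 0)
    (hdens : Measure.map W ℙ = volume.withDensity (fun w => ENNReal.ofReal (gW w)))
    (G H B A : ℝ → ℝ)
    (hG : ∀ u, G u = (ℙ {ω | W ω ≤ u}).toReal)
    (hGmono : StrictMonoOn G (Set.Ici 0))
    (hGrange : G '' Set.Ici 0 = Set.Ico 0 1)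
    (hH : ∀ u ≥ (0 : ℝ), H (G u) = u)
    (hGH : ∀ v ∈ Set.Ico (0 : ℝ) 1, G (H v) = v)
    (hB : ∀ t, B t = 1 / H (1 / t))
    (hA : ∀ t, A t = t * ∫ u in Set.Ioc (0 : ℝ) (B t), G (1 / u))
    (hreg : ∀ s > (0 : ℝ),
      Tendsto (fun t => G (s * t) / G t) (nhdsWithin 0 (Set.Ioi 0)) (nhds (s ^ (1 : ℝ))))
    (hinf : ∫⁻ u in Set.Ioi (0 : ℝ), ENNReal.ofReal (G (1 / u)) = ⊤) :
    Tendsto (fun t => A t / B t) atTop atTop := by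
  have hcdf : G = cdf (Measure.map W ℙ) := eq_cdf_map hWmeas hG
  have hzero : G 0 = 0 :=
    (hGmono.monotoneOn.map_isLeast isLeast_Ici).unique (hGrange ▸ isLeast_Ico zero_lt_one)
  have hGH' : ∀ᶠ v in 𝓝[>] 0, G (H v) = v :=
    mem_of_superset (Ioo_mem_nhdsGT zero_lt_one) fun v hv => hGH v (Set.Ioo_subset_Ico_self hv)
  exact stmt6_general le_rfl (hcdf ▸ monotone_cdf _) hzero
    (hcdf ▸ integrableOn_cdf_one_div _ 0) hGH' hB hA hreg
end

section
/- Let β ∈ (0, 1] and γ ∈ ℝ, and suppose the CDF G of W satisfies G(u) ~ c·u^β·|ln u|^γ as u → 0+ for some constant c > 0. Then there exists a constant c' > 0 such that B(t) ~ c'·t^{1/β}·(ln t)^{γ/β} as t → ∞, where B(t) = 1/H(1/t) and H is the inverse of G. -/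
open MeasureTheory ProbabilityTheory Filter Real

/-! Put `x = B t = 1 / H (1 / t)`. Substituting `u = H (1 / t)` in the asymptotics of `G` at `0`
gives `t ~ c⁻¹ * x ^ β * (log x) ^ (-γ)` with `x → ∞`. Taking logarithms, `log t ~ β * log x`,
since `log log x` is negligible against `log x`; hence `log x` may be replaced by `log t / β`
and the relation solved for `x`. -/

open Asymptotics Set Topology

section Inverse

variable {α β : Type*} [LinearOrder α] [TopologicalSpace α] [OrderTopology α] [NoMaxOrder α]
  [LinearOrder β] [TopologicalSpace β] [OrderClosedTopology β] {G : α → β} {H : β → α} {a : α}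

theorem tendsto_nhdsGT_of_eventually_rightInverse (hG : StrictMonoOn G (Ici a))
    (hGH : ∀ᶠ v in 𝓝[>] G a, H v ∈ Ici a ∧ G (H v) = v) :
    Tendsto H (𝓝[>] G a) (𝓝[>] a) := by
  refine (nhdsGT_basis a).tendsto_right_iff.2 fun ε hε => ?_
  have hGε : G a < G ε := hG self_mem_Ici hε.le hε
  filter_upwards [hGH, Ioo_mem_nhdsGT hGε] with v ⟨haH, hGHv⟩ ⟨hav, hvε⟩
  rw [← hGHv] at hav hvε
  exact ⟨(hG.lt_iff_lt self_mem_Ici haH).1 hav, (hG.lt_iff_lt haH hε.le).1 hvε⟩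

theorem tendsto_nhdsGT_of_leftInvOn_of_image_eq_Ico {b d : β} (hG : StrictMonoOn G (Ici a))
    (himage : G '' Ici a = Ico b d) (hH : LeftInvOn H G (Ici a)) (hbd : b < d) :
    Tendsto H (𝓝[>] b) (𝓝[>] a) := by
  have hGa : G a = b :=
    (hG.monotoneOn.map_isLeast isLeast_Ici).unique (himage ▸ isLeast_Ico hbd)
  have hmaps : MapsTo H (Ico b d) (Ici a) := hH.mapsTo himage.ge
  have hright : RightInvOn H G (Ico b d) := himage ▸ hH.rightInvOn_image
  subst hGa
  refine tendsto_nhdsGT_of_eventually_rightInverse hG ?_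
  filter_upwards [Ioo_mem_nhdsGT hbd] with v hv
  exact ⟨hmaps (Ioo_subset_Ico_self hv), hright (Ioo_subset_Ico_self hv)⟩

end Inverse

section Asymptotics

variable {α : Type*} {l : Filter α}

theorem isEquivalent_rpow_of_eventually_nonneg {u v : α → ℝ} (h : u ~[l] v)
    (hv : ∀ᶠ a in l, 0 ≤ v a) (r : ℝ) : (fun a => u a ^ r) ~[l] fun a => v a ^ r := by
  have habs : v =ᶠ[l] fun a => |v a| := hv.mono fun a ha => (abs_of_nonneg ha).symm
  have hrpow := (h.congr_right habs).rpow (fun a => abs_nonneg (v a)) (r := r)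
  exact hrpow.congr_right (habs.symm.fun_comp (· ^ r))

theorem isLittleO_log_log_log_atTop : (fun x : ℝ => log (log x)) =o[atTop] log :=
  isLittleO_log_id_atTop.comp_tendsto tendsto_log_atTop

variable {C β δ : ℝ}

theorem eventually_mul_rpow_mul_log_rpow_pos (hC : 0 < C) :
    ∀ᶠ x in atTop, 0 < C * x ^ β * log x ^ δ := by
  filter_upwards [eventually_gt_atTop 1] with x hx
  have := log_pos hx
  positivity

theorem isEquivalent_log_mul_rpow_mul_log_rpow (hC : C ≠ 0) (hβ : β ≠ 0) :
    (fun x => log (C * x ^ β * log x ^ δ)) ~[atTop] fun x => β * log x := by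
  have hlog : (fun x => log C + β * log x + δ * log (log x)) =ᶠ[atTop]
      fun x => log (C * x ^ β * log x ^ δ) := by
    filter_upwards [eventually_gt_atTop 1] with x hx
    have hx0 : 0 < x := one_pos.trans hx
    have hlogx : 0 < log x := log_pos hx
    rw [log_mul (by positivity) (by positivity), log_mul hC (by positivity),
      log_rpow hx0, log_rpow hlogx]
  have hconst : (fun _ => log C) =o[atTop] fun x => β * log x :=
    isLittleO_const_log_atTop.const_mul_right hβ
  have hloglog : (fun x => δ * log (log x)) =o[atTop] fun x => β * log x :=
    (isLittleO_log_log_log_atTop.const_mul_left δ).const_mul_right hβ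
  exact ((hconst.add_isEquivalent .refl).add_isLittleO hloglog).congr_left hlog

theorem tendsto_mul_rpow_mul_log_rpow_atTop (hC : 0 < C) (hβ : 0 < β) :
    Tendsto (fun x => C * x ^ β * log x ^ δ) atTop atTop := by
  have hlog : Tendsto (fun x => log (C * x ^ β * log x ^ δ)) atTop atTop :=
    (isEquivalent_log_mul_rpow_mul_log_rpow hC.ne' hβ.ne').symm.tendsto_atTop
      (tendsto_log_atTop.const_mul_atTop hβ)
  exact (tendsto_exp_atTop.comp hlog).congr'
    ((eventually_mul_rpow_mul_log_rpow_pos hC).mono fun _ => exp_log)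

theorem isEquivalent_of_isEquivalent_mul_rpow_mul_log_rpow {x s : α → ℝ} (hC : 0 < C)
    (hβ : 0 < β) (hx : Tendsto x l atTop)
    (hs : s ~[l] fun a => C * x a ^ β * log (x a) ^ δ) :
    x ~[l] fun a => C ^ (-(1 / β)) * β ^ (δ / β) * s a ^ (1 / β) * log (s a) ^ (-(δ / β)) := by
  have hxβ : (fun a => log (s a)) ~[l] fun a => β * log (x a) :=
    (hs.log ((tendsto_mul_rpow_mul_log_rpow_atTop hC hβ).comp hx)).trans
      ((isEquivalent_log_mul_rpow_mul_log_rpow hC.ne' hβ.ne').comp_tendsto hx)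
  have hx1 : ∀ᶠ a in l, 1 < x a := hx.eventually_gt_atTop 1
  have hs_rpow := isEquivalent_rpow_of_eventually_nonneg hs
    ((hx.eventually (eventually_mul_rpow_mul_log_rpow_pos hC)).mono fun _ => le_of_lt) (1 / β)
  have hlog_rpow := isEquivalent_rpow_of_eventually_nonneg hxβ
    (hx1.mono fun a ha => mul_nonneg hβ.le (log_pos ha).le) (-(δ / β))
  have hprod := (IsEquivalent.refl (u := fun _ => C ^ (-(1 / β)) * β ^ (δ / β))).mul
    (hs_rpow.mul hlog_rpow)
  have hsolve : ∀ᶠ a in l, C ^ (-(1 / β)) * β ^ (δ / β) *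
      ((C * x a ^ β * log (x a) ^ δ) ^ (1 / β) * (β * log (x a)) ^ (-(δ / β))) = x a := by
    filter_upwards [hx1] with a ha
    have hxa : 0 < x a := one_pos.trans ha
    have hlogxa : 0 < log (x a) := log_pos ha
    rw [mul_rpow (by positivity) (by positivity), mul_rpow hC.le (by positivity),
      mul_rpow hβ.le hlogxa.le, ← rpow_mul hxa.le, ← rpow_mul hlogxa.le,
      mul_one_div_cancel hβ.ne', rpow_one, mul_one_div, rpow_neg hC.le, rpow_neg hβ.le,
      rpow_neg hlogxa.le]
    field_simp
  simpa only [Pi.mul_def, mul_assoc] using (hprod.congr_right hsolve).symm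

end Asymptotics

theorem isEquivalent_inv_of_isEquivalent_mul_rpow_mul_abs_log_rpow {G : ℝ → ℝ} {c β γ : ℝ}
    (hG : G ~[𝓝[>] 0] fun u => c * u ^ β * |log u| ^ γ) :
    (fun x => (G x⁻¹)⁻¹) ~[atTop] fun x => c⁻¹ * x ^ β * log x ^ (-γ) := by
  refine (hG.comp_tendsto tendsto_inv_atTop_nhdsGT_zero).inv.congr_right ?_
  filter_upwards [eventually_gt_atTop 1] with x hx
  have hlogx : 0 < log x := log_pos hx
  simp only [Pi.inv_apply, Function.comp_apply]
  rw [log_inv, abs_neg, abs_of_pos hlogx, inv_rpow (by positivity), rpow_neg hlogx.le,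
    mul_inv, mul_inv, inv_inv]

theorem stmt12_general {G H : ℝ → ℝ} {β γ c : ℝ} (hβ : 0 < β) (hc : 0 < c)
    (hH : Tendsto H (𝓝[>] 0) (𝓝[>] 0)) (hGH : ∀ᶠ v in 𝓝[>] 0, G (H v) = v)
    (hG : Tendsto (fun u => G u / (c * u ^ β * |log u| ^ γ)) (𝓝[>] 0) (𝓝 1)) :
    Tendsto (fun t => 1 / H (1 / t) / (c ^ (1 / β) * β ^ (-(γ / β)) * t ^ (1 / β) *
      log t ^ (γ / β))) atTop (𝓝 1) := by
  have hinv : Tendsto (fun t : ℝ => 1 / t) atTop (𝓝[>] 0) := by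
    simpa only [one_div] using tendsto_inv_atTop_nhdsGT_zero
  have hB : Tendsto (fun t => 1 / H (1 / t)) atTop atTop := by
    simpa only [Function.comp_def, one_div] using tendsto_inv_nhdsGT_zero.comp (hH.comp hinv)
  have hGB : (fun t => (G (1 / H (1 / t))⁻¹)⁻¹) =ᶠ[atTop] fun t => t := by
    filter_upwards [hinv.eventually hGH] with t ht
    rw [one_div (H _), inv_inv, ht, one_div, inv_inv]
  have ht : (fun t => t) ~[atTop]
      fun t => c⁻¹ * (1 / H (1 / t)) ^ β * log (1 / H (1 / t)) ^ (-γ) :=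
    ((isEquivalent_inv_of_isEquivalent_mul_rpow_mul_abs_log_rpow
      (isEquivalent_of_tendsto_one hG)).comp_tendsto hB).congr_left hGB
  have hequiv := isEquivalent_of_isEquivalent_mul_rpow_mul_log_rpow (inv_pos.2 hc) hβ hB ht
  rw [inv_rpow hc.le, ← rpow_neg hc.le, neg_neg, neg_div, neg_neg] at hequiv
  refine (isEquivalent_iff_tendsto_one ?_).1 hequiv
  exact (eventually_mul_rpow_mul_log_rpow_pos (by positivity)).mono fun _ => ne_of_gt

/-- Let `β ∈ (0,1]` and `γ ∈ ℝ`, and suppose the CDF `G` of `W` satisfies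
`G(u) ~ c·u^β·|ln u|^γ` as `u → 0+` for some `c > 0`.  Then there is `c' > 0` such that
`B(t) ~ c'·t^{1/β}·(ln t)^{γ/β}` as `t → ∞`, where `B t = 1/H(1/t)` and `H` is the inverse
of `G`. -/
theorem stmt12
    {Ω : Type*} [MeasureSpace Ω] [IsProbabilityMeasure (ℙ : Measure Ω)]
    (W : Ω → ℝ) (hWmeas : Measurable W)
    (gW : ℝ → ℝ)
    (hgW_pos : ∀ w ∈ Set.Ioi (0 : ℝ), 0 < gW w)
    (hgW_cont : ContinuousOn gW (Set.Ioi 0))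
    (hgW_supp : ∀ w ≤ (0 : ℝ), gW w = 0)
    (hdens : Measure.map W ℙ = volume.withDensity (fun w => ENNReal.ofReal (gW w)))
    (G H B : ℝ → ℝ)
    (hG : ∀ u, G u = (ℙ {ω | W ω ≤ u}).toReal)
    (hGmono : StrictMonoOn G (Set.Ici 0))
    (hGrange : G '' Set.Ici 0 = Set.Ico 0 1)
    (hH : ∀ u ≥ (0 : ℝ), H (G u) = u)
    (hGH : ∀ v ∈ Set.Ico (0 : ℝ) 1, G (H v) = v)
    (hB : ∀ t, B t = 1 / H (1 / t))
    (β γ : ℝ) (hβ : β ∈ Set.Ioc (0 : ℝ) 1)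
    (c : ℝ) (hc : 0 < c)
    (hasymp : Tendsto (fun u => G u / (c * u ^ β * |Real.log u| ^ γ))
      (nhdsWithin 0 (Set.Ioi 0)) (nhds 1)) :
    ∃ c' > (0 : ℝ),
      Tendsto (fun t => B t / (c' * t ^ (1 / β) * (Real.log t) ^ (γ / β)))
        atTop (nhds 1) := by
  have hGH_near : ∀ᶠ v in 𝓝[>] 0, G (H v) = v :=
    eventually_of_mem (Ioo_mem_nhdsGT one_pos) fun v hv => hGH v (Ioo_subset_Ico_self hv)
  exact ⟨_, mul_pos (rpow_pos_of_pos hc _) (rpow_pos_of_pos hβ.1 _), by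
    simpa only [hB] using stmt12_general hβ.1 hc
      (tendsto_nhdsGT_of_leftInvOn_of_image_eq_Ico hGmono hGrange hH one_pos) hGH_near hasymp⟩
end
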